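/- arXiv:2505.24720 — 3 statements merged into one kernel-verified Lean document; each statement's English description precedes it below -/
import Mathlib

section
/- Let k be a field, V a finite-dimensional k-vector space, and W_0, …, W_n (n ≥ 0) nonzero linear subspaces of V that together span V and whose dimensions sum to dim V. Let v ∈ V be a general vector, i.e., for every index i, v does not lie in the span of the subspaces W_j with j ≠ i. Then there exists a unique linear subspace M ⊆ V with dim M = n + 1, v ∈ M, and M ∩ W_i ≠ 0 for every i. (This is the vector-space form of the paper's Lemma on linear spaces in projective space: if linear subspaces L_0, …, L_n ⊆ ℙ^N span ℙ^N and ∑(1 + dim L_i) = 1 + N, then through a general point p ∈ ℙ^N there is a unique n-dimensional linear subvariety meeting every L_i.) -/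
/-!
Write a general vector as `v = ∑ i, w i` with `w i ∈ W i`; generality says that every `w i` is
nonzero, and the `w i` span a subspace with the required properties. Conversely, a subspace `M` of
the right dimension meeting every `W i` is spanned by nonzero vectors `u i ∈ M ⊓ W i`, since these
are independent. Expanding `v ∈ M` in the `u i` and comparing components gives `w i ∈ span {u i}`,
so `M` contains every `w i` and is therefore equal to their span.
-/

open Module Submodule

section Components

variable {ι R N : Type*} [Fintype ι]

theorem exists_sum_eq_of_forall_notMem_iSup_ne [Semiring R] [AddCommMonoid N] [Module R N]
    {W : ι → Submodule R N} {v : N} (hv : v ∈ ⨆ i, W i)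
    (hv_gen : ∀ i, v ∉ ⨆ j, ⨆ _ : j ≠ i, W j) :
    ∃ w : ι → N, (∀ i, w i ∈ W i) ∧ (∀ i, w i ≠ 0) ∧ ∑ i, w i = v := by
  obtain ⟨w, hw, rfl⟩ := (mem_iSup_iff_exists_finsupp W v).1 hv
  rw [w.sum_fintype _ fun _ ↦ rfl] at hv_gen ⊢
  refine ⟨w, hw, fun i hi ↦ hv_gen i (sum_mem fun j _ ↦ ?_), rfl⟩
  obtain rfl | hj := eq_or_ne j i
  · exact hi ▸ zero_mem _
  · exact mem_iSup_of_mem j (mem_iSup_of_mem hj (hw j))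

theorem mem_span_range_of_sum_mem_span_range [Ring R] [AddCommGroup N] [Module R N]
    {W : ι → Submodule R N} (hW : iSupIndep W) {u w : ι → N} (hu : ∀ i, u i ∈ W i)
    (hw : ∀ i, w i ∈ W i) (hsum : ∑ i, w i ∈ span R (Set.range u)) (i : ι) :
    w i ∈ span R (Set.range u) := by
  obtain ⟨c, hc⟩ := (mem_span_range_iff_exists_fun R).1 hsum
  have hwi : c i • u i = w i :=
    (iSupIndep_iff_finsetSum_eq_imp_eq W).1 hW .univ (fun j ↦ c j • u j) w
      (fun j _ ↦ ⟨(W j).smul_mem _ (hu j), hw j⟩) hc i (Finset.mem_univ i)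
  exact hwi ▸ smul_mem _ _ (subset_span ⟨i, rfl⟩)

end Components

section DivisionRing

variable {ι K V : Type*} [Fintype ι] [DivisionRing K] [AddCommGroup V] [Module K V]

theorem iSupIndep_of_sum_finrank_eq_finrank_iSup {W : ι → Submodule K V}
    [∀ i, FiniteDimensional K (W i)]
    (hW : ∑ i, finrank K (W i) = finrank K (⨆ i, W i : Submodule K V)) : iSupIndep W := by
  classical
  let sumMap : (Π₀ i, W i) →ₗ[K] V := DFinsupp.lsum ℕ fun i ↦ (W i).subtype
  have finrank_domain : finrank K (Π₀ i, W i) = ∑ i, finrank K (W i) :=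
    finrank_directSum K fun i ↦ W i
  have finrank_range : finrank K sumMap.range = finrank K (Π₀ i, W i) := by
    rw [← iSup_eq_range_dfinsupp_lsum, finrank_domain, hW]
  have finrank_ker : finrank K sumMap.ker = 0 := by
    have := sumMap.finrank_range_add_finrank_ker
    lia
  exact iSupIndep_of_dfinsupp_lsum_injective W
    (LinearMap.ker_eq_bot.1 (finrank_eq_zero.1 finrank_ker))

variable [Nonempty ι]

theorem span_range_eq_of_mem_of_finrank_eq_card {u : ι → V} (hu : LinearIndependent K u)
    {M : Submodule K V} (huM : ∀ i, u i ∈ M) (hM : finrank K M = Fintype.card ι) :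
    span K (Set.range u) = M := by
  have : FiniteDimensional K M := .of_finrank_pos (hM ▸ Fintype.card_pos)
  refine eq_of_le_of_finrank_eq (span_le.2 (Set.range_subset_iff.2 huM)) ?_
  rw [finrank_span_eq_card hu, hM]

theorem exists_span_range_eq_of_inf_ne_bot {W : ι → Submodule K V} (hW : iSupIndep W)
    {M : Submodule K V} (hM : finrank K M = Fintype.card ι) (hMW : ∀ i, M ⊓ W i ≠ ⊥) :
    ∃ u : ι → V, (∀ i, u i ∈ W i) ∧ span K (Set.range u) = M := by
  choose u hu hu_ne using fun i ↦ exists_mem_ne_zero_of_ne_bot (hMW i)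
  have hu_indep : LinearIndependent K u := hW.linearIndependent W (fun i ↦ (hu i).2) hu_ne
  exact ⟨u, fun i ↦ (hu i).2,
    span_range_eq_of_mem_of_finrank_eq_card hu_indep (fun i ↦ (hu i).1) hM⟩

theorem unique_subspace_through_general_vector_general {W : ι → Submodule K V}
    (hW : iSupIndep W) {v : V} (hv : v ∈ ⨆ i, W i)
    (hv_gen : ∀ i, v ∉ ⨆ j, ⨆ _ : j ≠ i, W j) :
    ∃! M : Submodule K V,
      finrank K M = Fintype.card ι ∧ v ∈ M ∧ ∀ i, M ⊓ W i ≠ ⊥ := by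
  obtain ⟨w, hw, hw_ne, rfl⟩ := exists_sum_eq_of_forall_notMem_iSup_ne hv hv_gen
  have hw_indep : LinearIndependent K w := hW.linearIndependent W hw hw_ne
  have hw_span (i : ι) : w i ∈ span K (Set.range w) := subset_span ⟨i, rfl⟩
  refine ⟨span K (Set.range w), ⟨finrank_span_eq_card hw_indep, sum_mem fun i _ ↦ hw_span i,
    fun i ↦ (Submodule.ne_bot_iff _).2 ⟨w i, ⟨hw_span i, hw i⟩, hw_ne i⟩⟩, ?_⟩
  rintro M ⟨hM, hvM, hMW⟩
  obtain ⟨u, hu, rfl⟩ := exists_span_range_eq_of_inf_ne_bot hW hM hMW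
  have hwM : ∀ i, w i ∈ span K (Set.range u) := mem_span_range_of_sum_mem_span_range hW hu hw hvM
  exact (span_range_eq_of_mem_of_finrank_eq_card hw_indep hwM hM).symm

end DivisionRing

/-- **Spanning lemma (vector-space form).**
Let `k` be a field, `V` a finite-dimensional `k`-vector space, and
`W 0, …, W n` nonzero subspaces of `V` that together span `V` and whose
dimensions sum to `dim V`.  If `v ∈ V` is general, i.e. for every `i`, `v`
does not lie in the span of the `W j` with `j ≠ i`, then there is a unique
subspace `M ⊆ V` with `dim M = n + 1`, `v ∈ M`, and `M ∩ W i ≠ 0` for all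
`i`. -/
theorem unique_subspace_through_general_vector
    (k : Type*) [Field k] (V : Type*) [AddCommGroup V] [Module k V]
    [FiniteDimensional k V] (n : ℕ) (W : Fin (n + 1) → Submodule k V)
    (hW_ne : ∀ i, W i ≠ ⊥)
    (hW_span : ⨆ i, W i = ⊤)
    (hW_dim : ∑ i, Module.finrank k (W i) = Module.finrank k V)
    (v : V)
    (hv_gen : ∀ i, v ∉ ⨆ j, ⨆ _ : j ≠ i, W j) :
    ∃! M : Submodule k V,
      Module.finrank k M = n + 1 ∧ v ∈ M ∧ ∀ i, M ⊓ W i ≠ ⊥ := by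
  have hW : iSupIndep W :=
    iSupIndep_of_sum_finrank_eq_finrank_iSup (by rw [hW_dim, hW_span, finrank_top])
  simpa using unique_subspace_through_general_vector_general hW (hW_span ▸ mem_top) hv_gen
end

section
/- Let k be a field, V a finite-dimensional k-vector space, and W_0, …, W_n nonzero linear subspaces of V that together span V and whose dimensions sum to dim V, so that V = W_0 ⊕ ⋯ ⊕ W_n is an internal direct sum. Let v ∈ V be a general vector, i.e., for every index i, v does not lie in the span of the subspaces W_j with j ≠ i, and write v = v_0 + ⋯ + v_n with v_i ∈ W_i the components of v under the direct sum decomposition. Then each v_i is nonzero, the family (v_0, …, v_n) is linearly independent, the subspace M = span{v_0, …, v_n} has dimension n + 1, contains v, satisfies dim(M ∩ W_i) = 1 for every i, and M is the unique subspace of dimension n + 1 containing v with M ∩ W_i ≠ 0 for all i. -/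
/-!
For an independent family `W`, components are functorial: if `U i ≤ W i` for all `i` and
`∑ i, c i ∈ ⨆ i, U i` with `c i ∈ W i`, then `c i ∈ U i`. A subspace `M` that meets every `W i`
nontrivially contains the independent lines spanned by nonzero vectors of the `M ⊓ W i`, so if its
dimension is only the number of summands, then `M = ⨆ i, M ⊓ W i`. Hence `M` contains the
components of each of its vectors. The components of a general vector are nonzero, so they already
span a subspace of that dimension.
-/

open Module Submodule

theorem iSup_inf_eq_of_iSupIndep_of_le {ι α : Type*} [CompleteLattice α] [IsModularLattice α]
    {W U : ι → α} (hW : iSupIndep W) (hUW : U ≤ W) (i : ι) : (⨆ j, U j) ⊓ W i = U i := by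
  have hdisj : (⨆ (j) (_ : j ≠ i), U j) ⊓ W i = ⊥ :=
    ((hW i).symm.mono_left (iSup₂_mono fun j _ ↦ hUW j)).eq_bot
  rw [iSup_split_single U i, sup_inf_assoc_of_le _ (hUW i), hdisj, sup_bot_eq]

theorem ne_zero_of_sum_notMem_iSup_ne {R M ι : Type*} [Semiring R] [AddCommMonoid M] [Module R M]
    [Fintype ι] {W : ι → Submodule R M} {c : ι → M} (hc : ∀ i, c i ∈ W i) {i : ι}
    (hi : ∑ j, c j ∉ ⨆ (j) (_ : j ≠ i), W j) : c i ≠ 0 := by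
  contrapose hi
  refine sum_mem fun j _ ↦ ?_
  obtain rfl | hj := eq_or_ne j i
  · exact hi ▸ zero_mem _
  · exact mem_iSup_of_mem j (mem_iSup_of_mem hj (hc j))

section Ring

variable {R M ι : Type*} [Ring R] [AddCommGroup M] [Module R M] {W : ι → Submodule R M}

theorem mem_of_sum_mem_iSup_of_le [Fintype ι] (hW : iSupIndep W) {U : ι → Submodule R M}
    (hUW : U ≤ W) {c : ι → M} (hc : ∀ i, c i ∈ W i) (hsum : ∑ i, c i ∈ ⨆ i, U i) (i : ι) :
    c i ∈ U i := by
  obtain ⟨u, hu⟩ : ∃ u : ∀ i, U i, ∑ i, (u i : M) = ∑ i, c i := by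
    simpa using (mem_iSup_finset_iff_exists_sum (s := .univ) U (∑ i, c i)).mp (by simpa using hsum)
  have hcu : (u i : M) = c i :=
    (iSupIndep_iff_finsetSum_eq_imp_eq W).mp hW .univ (fun i ↦ u i) c
      (fun j _ ↦ ⟨hUW j (u j).2, hc j⟩) hu i (Finset.mem_univ i)
  exact hcu ▸ (u i).2

theorem span_range_inf_eq_span_singleton (hW : iSupIndep W) {c : ι → M} (hc : ∀ i, c i ∈ W i)
    (i : ι) : span R (Set.range c) ⊓ W i = span R {c i} := by
  rw [span_range_eq_iSup]
  exact iSup_inf_eq_of_iSupIndep_of_le hW (fun j ↦ (span_singleton_le_iff_mem _ _).mpr (hc j)) i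

end Ring

section DivisionRing

variable {k V ι : Type*} [DivisionRing k] [AddCommGroup V] [Module k V] [Fintype ι]
  {W : ι → Submodule k V}

theorem iSupIndep_of_sum_finrank_le_finrank_iSup [∀ i, FiniteDimensional k (W i)]
    (h : ∑ i, finrank k (W i) ≤ finrank k ↥(⨆ i, W i)) : iSupIndep W := by
  classical
  let f : (Π₀ i, W i) →ₗ[k] V := DFinsupp.lsum ℕ fun i ↦ (W i).subtype
  have hdom : finrank k (Π₀ i, W i) = ∑ i, finrank k (W i) := finrank_directSum k fun i ↦ W i
  have hrange : f.range = ⨆ i, W i := (iSup_eq_range_dfinsupp_lsum W).symm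
  have hker : finrank k f.ker = 0 := by
    have := f.finrank_range_add_finrank_ker
    rw [hrange] at this
    lia
  exact iSupIndep_of_dfinsupp_lsum_injective W (LinearMap.ker_eq_bot.mp (finrank_eq_zero.mp hker))

theorem iSup_inf_eq_of_finrank_le_card (hW : iSupIndep W) {M : Submodule k V}
    [FiniteDimensional k M] (hM : finrank k M ≤ Fintype.card ι) (hMW : ∀ i, M ⊓ W i ≠ ⊥) :
    ⨆ i, M ⊓ W i = M := by
  choose d hd hd0 using fun i ↦ exists_mem_ne_zero_of_ne_bot (hMW i)
  have hd_indep : LinearIndependent k d := hW.linearIndependent W (fun i ↦ (hd i).2) hd0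
  have hd_le : span k (Set.range d) ≤ ⨆ i, M ⊓ W i :=
    span_le.mpr (Set.range_subset_iff.mpr fun i ↦ mem_iSup_of_mem i (hd i))
  have hle : ⨆ i, M ⊓ W i ≤ M := iSup_le fun _ ↦ inf_le_left
  have hd_span : span k (Set.range d) = M :=
    eq_of_le_of_finrank_le (hd_le.trans hle) (by rwa [finrank_span_eq_card hd_indep])
  exact hle.antisymm (hd_span.ge.trans hd_le)

theorem eq_span_range_of_sum_mem_of_finrank_le_card (hW : iSupIndep W) {c : ι → V}
    (hc : ∀ i, c i ∈ W i) (hc0 : ∀ i, c i ≠ 0) {M : Submodule k V} [FiniteDimensional k M]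
    (hM : finrank k M ≤ Fintype.card ι) (hcM : ∑ i, c i ∈ M) (hMW : ∀ i, M ⊓ W i ≠ ⊥) :
    M = span k (Set.range c) := by
  rw [← iSup_inf_eq_of_finrank_le_card hW hM hMW] at hcM
  have hc_mem : ∀ i, c i ∈ M := fun i ↦
    (mem_of_sum_mem_iSup_of_le hW (fun _ ↦ inf_le_right) hc hcM i).1
  symm
  apply eq_of_le_of_finrank_le (span_le.mpr (Set.range_subset_iff.mpr hc_mem))
  rwa [finrank_span_eq_card (hW.linearIndependent W hc hc0)]

theorem general_vector_components_span_unique_subspace_general [Nonempty ι] (hW : iSupIndep W)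
    {v : V} (hv_gen : ∀ i, v ∉ ⨆ j, ⨆ _ : j ≠ i, W j) {c : ι → V} (hc_mem : ∀ i, c i ∈ W i)
    (hc_sum : v = ∑ i, c i) :
    (∀ i, c i ≠ 0) ∧
    LinearIndependent k c ∧
    finrank k (span k (Set.range c)) = Fintype.card ι ∧
    v ∈ span k (Set.range c) ∧
    (∀ i, finrank k ↥(span k (Set.range c) ⊓ W i) = 1) ∧
    (∀ M : Submodule k V, finrank k M = Fintype.card ι → v ∈ M →
      (∀ i, M ⊓ W i ≠ ⊥) → M = span k (Set.range c)) := by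
  subst hc_sum
  have hc0 : ∀ i, c i ≠ 0 := fun i ↦ ne_zero_of_sum_notMem_iSup_ne hc_mem (hv_gen i)
  have hc_indep : LinearIndependent k c := hW.linearIndependent W hc_mem hc0
  refine ⟨hc0, hc_indep, finrank_span_eq_card hc_indep,
    sum_mem fun i _ ↦ mem_span_of_mem (Set.mem_range_self i), fun i ↦ ?_, fun M hM hcM hMW ↦ ?_⟩
  · rw [span_range_inf_eq_span_singleton hW hc_mem, finrank_span_singleton (hc0 i)]
  · have : FiniteDimensional k M := finite_of_finrank_pos (hM ▸ Fintype.card_pos)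
    exact eq_span_range_of_sum_mem_of_finrank_le_card hW hc_mem hc0 hM.le hcM hMW

end DivisionRing

/-- **Spanning lemma, explicit form.**
Let `V = W 0 ⊕ ⋯ ⊕ W n` be an internal direct sum of nonzero subspaces
(`⨆ i, W i = ⊤` and `∑ dim W i = dim V`), and let `v` be a general vector,
written as `v = v₀ + ⋯ + vₙ` with `vᵢ ∈ W i`.  Then each `vᵢ` is nonzero,
the family `(v₀, …, vₙ)` is linearly independent, the subspace
`M = span {v₀, …, vₙ}` has dimension `n + 1`, contains `v`, meets each `W i`
in a line, and `M` is the unique `(n+1)`-dimensional subspace containing `v`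
that meets every `W i` nontrivially. -/
theorem general_vector_components_span_unique_subspace
    (k : Type*) [Field k] (V : Type*) [AddCommGroup V] [Module k V]
    [FiniteDimensional k V] (n : ℕ) (W : Fin (n + 1) → Submodule k V)
    (hW_ne : ∀ i, W i ≠ ⊥)
    (hW_span : ⨆ i, W i = ⊤)
    (hW_dim : ∑ i, Module.finrank k (W i) = Module.finrank k V)
    (v : V)
    (hv_gen : ∀ i, v ∉ ⨆ j, ⨆ _ : j ≠ i, W j)
    (c : Fin (n + 1) → V)
    (hc_mem : ∀ i, c i ∈ W i)
    (hc_sum : v = ∑ i, c i) :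
    (∀ i, c i ≠ 0) ∧
    LinearIndependent k c ∧
    Module.finrank k (Submodule.span k (Set.range c)) = n + 1 ∧
    v ∈ Submodule.span k (Set.range c) ∧
    (∀ i, Module.finrank k ↥(Submodule.span k (Set.range c) ⊓ W i) = 1) ∧
    (∀ M : Submodule k V, Module.finrank k M = n + 1 → v ∈ M →
      (∀ i, M ⊓ W i ≠ ⊥) → M = Submodule.span k (Set.range c)) := by
  have hW : iSupIndep W := iSupIndep_of_sum_finrank_le_finrank_iSup (by
    rw [hW_span, finrank_top, hW_dim])
  simpa only [Fintype.card_fin] using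
    general_vector_components_span_unique_subspace_general hW hv_gen hc_mem hc_sum
end

section
/- Let k be a field and let D_1 and D_2 be finite-dimensional division algebras over k whose centers equal k (i.e., central division k-algebras). Assume that dim_k D_1 and dim_k D_2 are coprime. Then the tensor product D_1 ⊗_k D_2 is a division algebra, i.e., every nonzero element of D_1 ⊗_k D_2 is invertible. (This is the algebraic content of the primary decomposition lemma: if P and Q are minimal Severi–Brauer varieties with (dim P + 1, dim Q + 1) = 1, then P ⊗ Q is the minimal Severi–Brauer variety in the Brauer class [P]·[Q].) -/
open scoped TensorProduct

/-!
Every left ideal of `D₁ ⊗[k] D₂` is a left vector space over both `D₁` and `D₂`, so its dimension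
over `k` is a multiple of both `dim D₁` and `dim D₂`, hence, by coprimality, of their product, which
is the dimension of the whole algebra. The only left ideals are therefore `⊥` and `⊤`,
which characterizes division rings among nontrivial rings.
-/

theorem eq_bot_or_eq_top_of_finrank_dvd_finrank {k A M : Type*} [DivisionRing k] [Ring A]
    [AddCommGroup M] [Module k M] [Module A M] [SMul k A] [IsScalarTower k A M]
    [FiniteDimensional k M] {W : Submodule A M}
    (h : Module.finrank k M ∣ Module.finrank k W) : W = ⊥ ∨ W = ⊤ := by
  have hle : Module.finrank k W ≤ Module.finrank k M := (W.restrictScalars k).finrank_le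
  rcases (Module.finrank k W).eq_zero_or_pos with hzero | hpos
  · left
    have hbot : W.restrictScalars k = ⊥ := Submodule.finrank_eq_zero.1 hzero
    exact (Submodule.restrictScalars_eq_bot_iff k A M).1 hbot
  · right
    have htop : W.restrictScalars k = ⊤ :=
      Submodule.eq_top_of_finrank_eq (hle.antisymm (Nat.le_of_dvd hpos h))
    exact (Submodule.restrictScalars_eq_top_iff k A M).1 htop

section AlgHom

variable {k D D₁ D₂ A M : Type*} [Field k] [DivisionRing D] [Algebra k D]
  [DivisionRing D₁] [Algebra k D₁] [DivisionRing D₂] [Algebra k D₂] [Ring A] [Algebra k A]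
  [AddCommGroup M] [Module k M] [Module A M] [IsScalarTower k A M]

variable (M) in
theorem finrank_dvd_finrank_of_algHom (f : D →ₐ[k] A) :
    Module.finrank k D ∣ Module.finrank k M := by
  let _ : Module D M := Module.compHom M f.toRingHom
  have : IsScalarTower k D M :=
    ⟨fun c d m ↦ show f (c • d) • m = c • (f d • m) by rw [map_smul, smul_assoc]⟩
  exact Dvd.intro _ (Module.finrank_mul_finrank k D M)

theorem isSimpleModule_of_finrank_eq_lcm [FiniteDimensional k M] [Nontrivial M]
    (f₁ : D₁ →ₐ[k] A) (f₂ : D₂ →ₐ[k] A)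
    (h : Module.finrank k M = (Module.finrank k D₁).lcm (Module.finrank k D₂)) :
    IsSimpleModule A M where
  eq_bot_or_eq_top W := by
    have hdvd : Module.finrank k M ∣ Module.finrank k W :=
      h ▸ Nat.lcm_dvd (finrank_dvd_finrank_of_algHom W f₁) (finrank_dvd_finrank_of_algHom W f₂)
    exact eq_bot_or_eq_top_of_finrank_dvd_finrank hdvd

end AlgHom

theorem tensorProduct_divisionAlgebra_of_coprime_finrank_general
    (k : Type*) [Field k]
    (D₁ D₂ : Type*) [DivisionRing D₁] [DivisionRing D₂]
    [Algebra k D₁] [Algebra k D₂]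
    [FiniteDimensional k D₁] [FiniteDimensional k D₂]
    (h : Nat.Coprime (Module.finrank k D₁) (Module.finrank k D₂)) :
    ∀ x : D₁ ⊗[k] D₂, x ≠ 0 → IsUnit x := by
  have hdim : Module.finrank k (D₁ ⊗[k] D₂) =
      (Module.finrank k D₁).lcm (Module.finrank k D₂) := by
    rw [Module.finrank_tensorProduct, h.lcm_eq_mul]
  have hsimple : IsSimpleModule (D₁ ⊗[k] D₂) (D₁ ⊗[k] D₂) :=
    isSimpleModule_of_finrank_eq_lcm Algebra.TensorProduct.includeLeft
      Algebra.TensorProduct.includeRight hdim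
  exact (isSimpleModule_self_iff_isUnit.1 hsimple).2

/-- **Tensor product of central division algebras of coprime degrees.**
If `D₁`, `D₂` are finite-dimensional central division algebras over a field
`k` and `dim_k D₁`, `dim_k D₂` are coprime, then `D₁ ⊗[k] D₂` is a division
algebra: every nonzero element is invertible. -/
theorem tensorProduct_divisionAlgebra_of_coprime_finrank
    (k : Type*) [Field k]
    (D₁ D₂ : Type*) [DivisionRing D₁] [DivisionRing D₂]
    [Algebra k D₁] [Algebra k D₂]
    [FiniteDimensional k D₁] [FiniteDimensional k D₂]
    [Algebra.IsCentral k D₁] [Algebra.IsCentral k D₂]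
    (h : Nat.Coprime (Module.finrank k D₁) (Module.finrank k D₂)) :
    ∀ x : D₁ ⊗[k] D₂, x ≠ 0 → IsUnit x :=
  tensorProduct_divisionAlgebra_of_coprime_finrank_general k D₁ D₂ h
end
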